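/- Let n : ℕ, let A and T be sets of elements of the free group Fₙ on generators x₁,…,xₙ, and for each subset Z ⊆ T let G_Z denote the presented group Fₙ/⟨⟨A ∪ Z⟩⟩ (the quotient of Fₙ by the normal closure of A ∪ Z). Assume that for every Z ⊆ T and every r ∈ T, the image of r in G_Z is trivial if and only if r ∈ Z. Then for every fixed Z₀ ⊆ T, the set {Z ⊆ T | G_Z is isomorphic to G_{Z₀}} is countable. -/

import Mathlib

/-- Given a fixed set `A` of relators and a subset `Z` of an auxiliary set `T` of relators,
`GZ A Z` is the presented group `⟨x₁,…,xₙ | A ∪ Z⟩`. -/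
abbrev GZ {n : ℕ} (A Z : Set (FreeGroup (Fin n))) : Type :=
  PresentedGroup (A ∪ Z)

/-- **Countability of isomorphism classes in the family `G_Z`.** If for every `Z ⊆ T` a
relator `r ∈ T` dies in `G_Z = ⟨x₁,…,xₙ | A ∪ Z⟩` exactly when `r ∈ Z`, then for each fixed
`Z₀ ⊆ T` only countably many subsets `Z ⊆ T` give a group `G_Z` isomorphic to `G_{Z₀}`. -/
theorem countable_isomorphic_GZ (n : ℕ) (A T : Set (FreeGroup (Fin n)))
    (h : ∀ Z ⊆ T, ∀ r ∈ T, PresentedGroup.mk (A ∪ Z) r = 1 ↔ r ∈ Z)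
    (Z₀ : Set (FreeGroup (Fin n))) (hZ₀ : Z₀ ⊆ T) :
    Set.Countable {Z : Set (FreeGroup (Fin n)) |
      Z ⊆ T ∧ Nonempty (GZ A Z ≃* GZ A Z₀)} := by
  have c1 : Countable (FreeGroup (Fin n)) :=
    Function.Injective.countable (FreeGroup.toWord_injective (α := Fin n))
  have c2 : Countable (GZ A Z₀) :=
    Function.Surjective.countable (PresentedGroup.mk_surjective (A ∪ Z₀))
  refine (Set.countable_range (fun S : Fin n → GZ A Z₀ =>
    {r : FreeGroup (Fin n) | r ∈ T ∧ FreeGroup.lift S r = 1})).mono ?_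
  rintro Z ⟨hZ, ⟨e⟩⟩
  refine ⟨fun i => e (PresentedGroup.mk (A ∪ Z) (FreeGroup.of i)), ?_⟩
  have key : FreeGroup.lift (fun i => e (PresentedGroup.mk (A ∪ Z) (FreeGroup.of i)))
      = e.toMonoidHom.comp (PresentedGroup.mk (A ∪ Z)) := by
    ext i
    simp
  ext r
  simp only [Set.mem_setOf_eq, key]
  constructor
  · rintro ⟨hr, h1⟩
    refine (h Z hZ r hr).1 ?_
    exact e.injective (by simpa using h1)
  · intro hr
    refine ⟨hZ hr, ?_⟩
    have := (h Z hZ r (hZ hr)).2 hr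
    simp [this]
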